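/- Let n ≥ 1, m ∈ ℕ, let A ∈ M_n(ℂ) be Hermitian and let B : Fin m → M_n(ℂ) be a family of Hermitian matrices. Then the function D ↦ log(Re Tr exp(A + ∑_{i} D i • B i)) from (Fin m → ℝ) to ℝ is convex on the whole space (ConvexOn ℝ Set.univ). -/

import Mathlib

/-!
The real diagonal of a Hermitian matrix `X` in an orthonormal basis is obtained from its
eigenvalues by a doubly stochastic matrix, so Jensen's inequality gives Peierls' inequality
`∑ i, exp ⟪uᵢ, X uᵢ⟫ ≤ Tr exp X`, with equality in an eigenbasis of `X`. Hence `log Tr exp` is the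
maximum, over all orthonormal bases, of log-sum-exp composed with a linear map, and a maximum of
convex functions is convex.
-/

open Matrix

section Convexity

lemma convexOn_of_forall_exists_convexOn_le_of_eq {𝕜 E β : Type*} [Semiring 𝕜] [PartialOrder 𝕜]
    [AddCommMonoid E] [SMul 𝕜 E] [AddCommMonoid β] [PartialOrder β] [IsOrderedAddMonoid β]
    [Module 𝕜 β] [PosSMulMono 𝕜 β] {s : Set E} {f : E → β} (hs : Convex 𝕜 s)
    (h : ∀ z ∈ s, ∃ g, ConvexOn 𝕜 s g ∧ (∀ x ∈ s, g x ≤ f x) ∧ g z = f z) :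
    ConvexOn 𝕜 s f := by
  refine ⟨hs, fun x hx y hy a b ha hb hab => ?_⟩
  obtain ⟨g, hg, hgf, hgz⟩ := h (a • x + b • y) (hs hx hy ha hb hab)
  calc f (a • x + b • y) = g (a • x + b • y) := hgz.symm
    _ ≤ a • g x + b • g y := hg.2 hx hy ha hb hab
    _ ≤ a • f x + b • f y :=
      add_le_add (smul_le_smul_of_nonneg_left (hgf x hx) ha)
        (smul_le_smul_of_nonneg_left (hgf y hy) hb)

lemma convexOn_log_sum_exp {ι : Type*} [Fintype ι] [Nonempty ι] :
    ConvexOn ℝ Set.univ (fun x : ι → ℝ => Real.log (∑ i, Real.exp (x i))) := by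
  refine ⟨convex_univ, fun x _ y _ a b ha hb hab => ?_⟩
  have sum_pos (z : ι → ℝ) : 0 < ∑ i, Real.exp (z i) :=
    Finset.sum_pos (fun i _ => Real.exp_pos _) Finset.univ_nonempty
  have sum_normalized (z : ι → ℝ) :
      ∑ i, Real.exp (z i - Real.log (∑ j, Real.exp (z j))) = 1 := by
    simp only [Real.exp_sub, Real.exp_log (sum_pos z), ← Finset.sum_div]
    exact div_self (sum_pos z).ne'
  set s := Real.log (∑ i, Real.exp (x i))
  set t := Real.log (∑ i, Real.exp (y i))
  have sum_le_one : ∑ i, Real.exp (a * (x i - s) + b * (y i - t)) ≤ 1 :=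
    calc ∑ i, Real.exp (a * (x i - s) + b * (y i - t))
        ≤ ∑ i, (a * Real.exp (x i - s) + b * Real.exp (y i - t)) :=
          Finset.sum_le_sum fun i _ =>
            convexOn_exp.2 (Set.mem_univ _) (Set.mem_univ _) ha hb hab
      _ = 1 := by
          rw [Finset.sum_add_distrib, ← Finset.mul_sum, ← Finset.mul_sum, sum_normalized x,
            sum_normalized y, mul_one, mul_one, hab]
  refine (Real.log_le_iff_le_exp (sum_pos _)).2 ?_
  calc ∑ i, Real.exp ((a • x + b • y) i)
      = Real.exp (a * s + b * t) * ∑ i, Real.exp (a * (x i - s) + b * (y i - t)) := by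
        rw [Finset.mul_sum]
        refine Finset.sum_congr rfl fun i _ => ?_
        rw [← Real.exp_add]
        simp only [Pi.add_apply, Pi.smul_apply, smul_eq_mul]
        ring_nf
    _ ≤ Real.exp (a • s + b • t) := mul_le_of_le_one_right (Real.exp_pos _).le sum_le_one

lemma sum_map_mulVec_le_of_mem_doublyStochastic {R n β : Type*} [Fintype n] [DecidableEq n]
    [Field R] [LinearOrder R] [IsStrictOrderedRing R]
    [AddCommGroup β] [PartialOrder β] [IsOrderedAddMonoid β] [Module R β]
    [IsStrictOrderedModule R β]
    {s : Set R} {f : R → β} (hf : ConvexOn R s f) {M : Matrix n n R}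
    (hM : M ∈ doublyStochastic R n) {x : n → R} (hx : ∀ j, x j ∈ s) :
    ∑ i, f ((M *ᵥ x) i) ≤ ∑ j, f (x j) :=
  calc ∑ i, f ((M *ᵥ x) i) ≤ ∑ i, ∑ j, M i j • f (x j) :=
        Finset.sum_le_sum fun i _ =>
          hf.map_sum_le (fun _ _ => nonneg_of_mem_doublyStochastic hM)
            (sum_row_of_mem_doublyStochastic hM i) fun j _ => hx j
    _ = ∑ j, f (x j) := by
        rw [Finset.sum_comm]
        simp only [← Finset.sum_smul, sum_col_of_mem_doublyStochastic hM, one_smul]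

end Convexity

section Hermitian

variable {𝕜 n : Type*} [RCLike 𝕜] [Fintype n] [DecidableEq n]

/-- The matrix of squared moduli of the entries of a unitary matrix: the transition probabilities
between two orthonormal bases. -/
def unistochasticMatrix (U : unitaryGroup n 𝕜) : Matrix n n ℝ :=
  (U : Matrix n n 𝕜).map fun z => ‖z‖ ^ 2

lemma unistochasticMatrix_apply (U : unitaryGroup n 𝕜) (i j : n) :
    unistochasticMatrix U i j = ‖(U : Matrix n n 𝕜) i j‖ ^ 2 :=
  rfl

lemma unistochasticMatrix_mem_doublyStochastic (U : unitaryGroup n 𝕜) :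
    unistochasticMatrix U ∈ doublyStochastic ℝ n := by
  refine mem_doublyStochastic_iff_sum.2 ⟨fun i j => sq_nonneg _, fun i => ?_, fun j => ?_⟩
  · have row_norm := ext_iff.2 (Unitary.mul_star_self_of_mem U.2) i i
    simp only [mul_apply, star_apply, RCLike.star_def, RCLike.mul_conj, one_apply_eq] at row_norm
    simp only [unistochasticMatrix_apply]
    exact_mod_cast row_norm
  · have col_norm := ext_iff.2 (Unitary.star_mul_self_of_mem U.2) j j
    simp only [mul_apply, star_apply, RCLike.star_def, RCLike.conj_mul, one_apply_eq] at col_norm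
    simp only [unistochasticMatrix_apply]
    exact_mod_cast col_norm

lemma re_conjStarAlgAut_diagonal_apply_self (U : unitaryGroup n 𝕜) (d : n → ℝ) (i : n) :
    RCLike.re (Unitary.conjStarAlgAut 𝕜 _ U (diagonal (RCLike.ofReal ∘ d)) i i) =
      (unistochasticMatrix U *ᵥ d) i := by
  rw [Unitary.conjStarAlgAut_apply, mul_apply, map_sum, mulVec, dotProduct]
  refine Finset.sum_congr rfl fun j _ => ?_
  rw [mul_diagonal, mul_right_comm, star_apply, RCLike.star_def, RCLike.mul_conj,
    Function.comp_apply, ← RCLike.ofReal_pow, ← RCLike.ofReal_mul, RCLike.ofReal_re,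
    unistochasticMatrix_apply]

/-- The vector of real parts of the diagonal entries of `star U * X * U`. For Hermitian `X` these
are the expectation values of `X` in the orthonormal basis formed by the columns of `U`. -/
noncomputable def diagExpectation (U : unitaryGroup n 𝕜) : Matrix n n 𝕜 →ₗ[ℝ] n → ℝ :=
  RCLike.reLm.compLeft n ∘ₗ diagLinearMap n ℝ 𝕜 ∘ₗ
    (Unitary.conjStarAlgAut ℝ (Matrix n n 𝕜) (star U)).toAlgEquiv.toLinearMap

lemma diagExpectation_apply (U : unitaryGroup n 𝕜) (X : Matrix n n 𝕜) (i : n) :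
    diagExpectation U X i = RCLike.re (Unitary.conjStarAlgAut 𝕜 _ (star U) X i i) :=
  rfl

lemma diagExpectation_eq_mulVec_eigenvalues {X : Matrix n n 𝕜} (hX : X.IsHermitian)
    (U : unitaryGroup n 𝕜) :
    diagExpectation U X =
      unistochasticMatrix (star U * hX.eigenvectorUnitary) *ᵥ hX.eigenvalues := by
  funext i
  rw [diagExpectation_apply, ← re_conjStarAlgAut_diagonal_apply_self,
    Unitary.conjStarAlgAut_mul_apply, ← hX.spectral_theorem]

lemma diagExpectation_eigenvectorUnitary {X : Matrix n n 𝕜} (hX : X.IsHermitian) :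
    diagExpectation hX.eigenvectorUnitary X = hX.eigenvalues := by
  funext i
  rw [diagExpectation_apply, hX.conjStarAlgAut_star_eigenvectorUnitary, diagonal_apply_eq,
    Function.comp_apply, RCLike.ofReal_re]

lemma sum_map_diagExpectation_le_sum_map_eigenvalues {X : Matrix n n 𝕜} (hX : X.IsHermitian)
    {s : Set ℝ} {f : ℝ → ℝ} (hf : ConvexOn ℝ s f) (hs : ∀ j, hX.eigenvalues j ∈ s)
    (U : unitaryGroup n 𝕜) :
    ∑ i, f (diagExpectation U X i) ≤ ∑ j, f (hX.eigenvalues j) := by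
  rw [diagExpectation_eq_mulVec_eigenvalues hX]
  exact sum_map_mulVec_le_of_mem_doublyStochastic hf (unistochasticMatrix_mem_doublyStochastic _) hs

lemma exp_conjStarAlgAut (U : unitaryGroup n 𝕜) (X : Matrix n n 𝕜) :
    NormedSpace.exp (Unitary.conjStarAlgAut 𝕜 _ U X) =
      Unitary.conjStarAlgAut 𝕜 _ U (NormedSpace.exp X) :=
  exp_units_conj (Unitary.toUnits U) X

lemma trace_conjStarAlgAut {R : Type*} [CommRing R] [StarRing R] (U : unitaryGroup n R)
    (X : Matrix n n R) : trace (Unitary.conjStarAlgAut R _ U X) = trace X := by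
  rw [Unitary.conjStarAlgAut_apply, trace_mul_cycle, Unitary.coe_star_mul_self, one_mul]

lemma re_trace_exp_eq_sum_exp_eigenvalues {X : Matrix n n 𝕜} (hX : X.IsHermitian) :
    RCLike.re (trace (NormedSpace.exp X)) = ∑ i, Real.exp (hX.eigenvalues i) := by
  have re_exp_ofReal (r : ℝ) : RCLike.re (NormedSpace.exp (r : 𝕜)) = Real.exp r := by
    rw [← RCLike.algebraMap_eq_ofReal, ← NormedSpace.algebraMap_exp_comm,
      RCLike.algebraMap_eq_ofReal, RCLike.ofReal_re, Real.exp_eq_exp_ℝ]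
  conv_lhs => rw [hX.spectral_theorem]
  rw [exp_conjStarAlgAut, trace_conjStarAlgAut, exp_diagonal, trace_diagonal, map_sum]
  simp only [Pi.coe_exp, Function.comp_apply, re_exp_ofReal]

theorem convexOn_log_re_trace_exp [Nonempty n] :
    ConvexOn ℝ {X : Matrix n n 𝕜 | X.IsHermitian}
      fun X => Real.log (RCLike.re (trace (NormedSpace.exp X))) := by
  have convex_isHermitian : Convex ℝ {X : Matrix n n 𝕜 | X.IsHermitian} :=
    (selfAdjoint.submodule ℝ (Matrix n n 𝕜)).convex
  refine convexOn_of_forall_exists_convexOn_le_of_eq convex_isHermitian fun Z hZ => ?_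
  let U := IsHermitian.eigenvectorUnitary hZ
  refine ⟨fun X => Real.log (∑ i, Real.exp (diagExpectation U X i)), ?_, fun X hX => ?_, ?_⟩
  · exact (convexOn_log_sum_exp.comp_linearMap (diagExpectation U)).subset
      (Set.subset_univ _) convex_isHermitian
  · rw [re_trace_exp_eq_sum_exp_eigenvalues hX]
    exact Real.log_le_log (Finset.sum_pos (fun _ _ => Real.exp_pos _) Finset.univ_nonempty)
      (sum_map_diagExpectation_le_sum_map_eigenvalues hX convexOn_exp (fun _ => Set.mem_univ _) U)
  · simp only [U, diagExpectation_eigenvectorUnitary hZ, re_trace_exp_eq_sum_exp_eigenvalues hZ]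

theorem log_trace_exp_multimode_convexOn_general {ι : Type*} [Fintype ι] [Nonempty n]
    (A : Matrix n n 𝕜) (hA : A.IsHermitian) (B : ι → Matrix n n 𝕜)
    (hB : ∀ i, (B i).IsHermitian) :
    ConvexOn ℝ Set.univ fun D : ι → ℝ =>
      Real.log (RCLike.re (trace (NormedSpace.exp (A + ∑ i, D i • B i)))) := by
  let hamiltonian : (ι → ℝ) →ᵃ[ℝ] Matrix n n 𝕜 :=
    AffineMap.const ℝ _ A + (Fintype.linearCombination ℝ B).toAffineMap
  have hamiltonian_isHermitian (D : ι → ℝ) : (hamiltonian D).IsHermitian :=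
    hA.add (isSelfAdjoint_sum _ fun i _ => (hB i).smul (IsSelfAdjoint.all (D i)))
  exact (convexOn_log_re_trace_exp.comp_affineMap hamiltonian).subset
    (fun D _ => hamiltonian_isHermitian D) convex_univ

end Hermitian

open NormedSpace in
/-- Multi-mode version: for `n ≥ 1`, a Hermitian `A ∈ M_n(ℂ)` and a family of Hermitian
matrices `B i`, the function `D ↦ log (Re Tr exp (A + ∑ i, D i • B i))` is convex on
`(Fin m → ℝ)`. -/
theorem log_trace_exp_multimode_convexOn (n m : ℕ) (hn : 1 ≤ n)
    (A : Matrix (Fin n) (Fin n) ℂ) (hA : A.IsHermitian)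
    (B : Fin m → Matrix (Fin n) (Fin n) ℂ) (hB : ∀ i, (B i).IsHermitian) :
    ConvexOn ℝ Set.univ
      (fun D : Fin m → ℝ =>
        Real.log (Matrix.trace (exp (A + ∑ i, D i • B i))).re) := by
  have : NeZero n := ⟨Nat.one_le_iff_ne_zero.1 hn⟩
  exact log_trace_exp_multimode_convexOn_general A hA B hB
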